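/- Let ∑ x_n be a conditionally convergent series in ℝ^k with sum range SR(x) = ℝ^k, and let ∑ y_n be an absolutely convergent series in ℝ^m with y_n ≠ 0 for every n ∈ ℕ. Then the achievement set A((x_n, y_n)_n) of the sequence of pairs in ℝ^k × ℝ^m is not a closed set. -/

import Mathlib

open Filter Topology

/-- The achievement set of a sequence: all limits of partial sums of subseries. -/
def achv {X : Type*} [AddCommMonoid X] [TopologicalSpace X] (x : ℕ → X) : Set X :=
  {s | ∃ ε : ℕ → Bool,
    Tendsto (fun N => ∑ n ∈ Finset.range N, if ε n then x n else 0) atTop (𝓝 s)}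

/-- The sum range of a sequence: all sums of convergent rearrangements. -/
def sumRange {X : Type*} [AddCommMonoid X] [TopologicalSpace X] (x : ℕ → X) : Set X :=
  {s | ∃ σ : Equiv.Perm ℕ,
    Tendsto (fun N => ∑ n ∈ Finset.range N, x (σ n)) atTop (𝓝 s)}

/-- Finite subsums belong to the achievement set. -/
lemma sum_mem_achv {X : Type*} [AddCommMonoid X] [TopologicalSpace X] (z : ℕ → X)
    (G : Finset ℕ) : ∑ n ∈ G, z n ∈ achv z := by
  refine ⟨fun n => decide (n ∈ G), tendsto_const_nhds.congr' ?_⟩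
  obtain ⟨N, hN⟩ := G.exists_nat_subset_range
  filter_upwards [eventually_ge_atTop N] with M hM
  have hG : G ⊆ Finset.range M := hN.trans (Finset.range_mono hM)
  simp [Finset.sum_ite_mem, Finset.inter_eq_right.2 hG]

/-- If the sum range is everything, then finite subsums of any tail are dense. -/
lemma exists_finset_tail_dist_lt {E : Type*} [NormedAddCommGroup E] {x : ℕ → E}
    (hsr : sumRange x = Set.univ) (N : ℕ) (s : E) {δ : ℝ} (hδ : 0 < δ) :
    ∃ F : Finset ℕ, Disjoint F (Finset.range N) ∧ dist (∑ n ∈ F, x n) s < δ := by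
  have hmem : s + ∑ n ∈ Finset.range N, x n ∈ sumRange x := hsr ▸ Set.mem_univ _
  obtain ⟨σ, hσ⟩ := hmem
  obtain ⟨K, hK⟩ := ((Finset.range N).map σ.symm.toEmbedding).exists_nat_subset_range
  obtain ⟨M, hM, hKM⟩ :=
    ((Metric.tendsto_nhds.1 hσ δ hδ).and (eventually_ge_atTop K)).exists
  have hsub : Finset.range N ⊆ (Finset.range M).map σ.toEmbedding := by
    intro n hn
    have h : σ.symm n ∈ Finset.range M :=
      Finset.range_mono hKM (hK (Finset.mem_map_of_mem _ hn))
    exact Finset.mem_map.2 ⟨σ.symm n, h, by simp⟩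
  refine ⟨(Finset.range M).map σ.toEmbedding \ Finset.range N, Finset.sdiff_disjoint, ?_⟩
  have hsum := Finset.sum_sdiff (f := x) hsub
  rw [Finset.sum_map] at hsum
  rw [← dist_add_right _ _ (∑ n ∈ Finset.range N, x n), hsum]
  exact hM

/-- Every point lying over a subsum of the absolutely convergent second coordinate is in the
closure of the achievement set. -/
lemma mem_closure_achv_prod {E F : Type*} [NormedAddCommGroup E] [NormedAddCommGroup F]
    [CompleteSpace F] {x : ℕ → E} {y : ℕ → F}
    (hsr : sumRange x = Set.univ) (hy : Summable fun n => ‖y n‖) (s : E) {t : F}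
    (ht : t ∈ achv y) : (s, t) ∈ closure (achv fun n => (x n, y n)) := by
  obtain ⟨ε, hε⟩ := ht
  rw [Metric.mem_closure_iff]
  intro δ hδ
  obtain ⟨S, hS⟩ := summable_iff_vanishing_norm.1 hy.of_norm (δ / 2) (half_pos hδ)
  obtain ⟨K, hK⟩ := S.exists_nat_subset_range
  obtain ⟨N, hN, hKN⟩ :=
    ((Metric.tendsto_nhds.1 hε (δ / 2) (half_pos hδ)).and (eventually_ge_atTop K)).exists
  set P := (Finset.range N).filter fun n => ε n
  obtain ⟨T, hT, hTx⟩ := exists_finset_tail_dist_lt hsr N (s - ∑ n ∈ P, x n) hδ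
  have hPT : Disjoint P T := (hT.mono_right (Finset.filter_subset _ _)).symm
  refine ⟨_, sum_mem_achv _ (P ∪ T), ?_⟩
  rw [dist_comm, Prod.dist_eq, Prod.fst_sum, Prod.snd_sum, Finset.sum_union hPT,
    Finset.sum_union hPT]
  refine max_lt ?_ ?_
  · rwa [dist_eq_norm, sub_sub_eq_add_sub, add_comm, ← dist_eq_norm] at hTx
  · have hTy := hS T (hT.mono_right (hK.trans (Finset.range_mono hKN)))
    rw [← Finset.sum_filter, dist_eq_norm] at hN
    rw [dist_eq_norm]
    calc ‖∑ n ∈ P, y n + ∑ n ∈ T, y n - t‖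
        = ‖(∑ n ∈ P, y n - t) + ∑ n ∈ T, y n‖ := by congr 1; abel
      _ ≤ _ := norm_add_le _ _
      _ < δ / 2 + δ / 2 := add_lt_add hN hTy
      _ = δ := add_halves δ

/-- Countably many nonzero vectors are simultaneously non-orthogonal to some vector. -/
lemma exists_forall_inner_ne_zero {E : Type*} [NormedAddCommGroup E] [InnerProductSpace ℝ E]
    [FiniteDimensional ℝ E] {y : ℕ → E} (hne : ∀ n, y n ≠ 0) :
    ∃ v : E, ∀ n, inner ℝ v (y n) ≠ 0 := by
  borelize E
  by_contra! h
  have hnull : MeasureTheory.volume (⋃ n, ((ℝ ∙ y n)ᗮ : Set E)) = 0 := by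
    refine MeasureTheory.measure_iUnion_null fun n => ?_
    refine MeasureTheory.Measure.addHaar_submodule _ _ fun htop => hne n ?_
    have hmem : y n ∈ (ℝ ∙ y n)ᗮ := htop ▸ Submodule.mem_top
    rwa [Submodule.mem_orthogonal_singleton_iff_inner_left, inner_self_eq_zero] at hmem
  have huniv : (⋃ n, ((ℝ ∙ y n)ᗮ : Set E)) = Set.univ := by
    refine Set.eq_univ_of_forall fun v => Set.mem_iUnion.2 ?_
    obtain ⟨n, hn⟩ := h v
    exact ⟨n, Submodule.mem_orthogonal_singleton_iff_inner_left.2 hn⟩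
  rw [huniv] at hnull
  exact isOpen_univ.measure_ne_zero _ Set.univ_nonempty hnull

/-- An absolutely convergent series of nonzero vectors has a subsum with a unique
representation. -/
lemma exists_unique_subsum {E : Type*} [NormedAddCommGroup E] [InnerProductSpace ℝ E]
    [FiniteDimensional ℝ E] {y : ℕ → E} (hy : Summable fun n => ‖y n‖) (hne : ∀ n, y n ≠ 0) :
    ∃ t ∈ achv y, ∃ η : ℕ → Bool, ∀ ε : ℕ → Bool,
      Tendsto (fun N => ∑ n ∈ Finset.range N, if ε n then y n else 0) atTop (𝓝 t) → ε = η := by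
  have : CompleteSpace E := FiniteDimensional.complete ℝ E
  obtain ⟨v, hv⟩ := exists_forall_inner_ne_zero hne
  have hsummable (ε : ℕ → Bool) : Summable fun n => if ε n then y n else 0 :=
    .of_norm_bounded hy fun n => by split_ifs <;> simp
  let η : ℕ → Bool := fun n => decide (0 < inner ℝ v (y n))
  refine ⟨_, ⟨η, (hsummable η).hasSum.tendsto_sum_nat⟩, η, fun ε hε => ?_⟩
  have hεsum := (hsummable ε).hasSum
  rw [tendsto_nhds_unique hεsum.tendsto_sum_nat hε] at hεsum
  have hε' := hεsum.mapL (innerSL ℝ v)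
  have hη' := (hsummable η).hasSum.mapL (innerSL ℝ v)
  have hle : ∀ n, innerSL ℝ v (if ε n then y n else 0) ≤ innerSL ℝ v (if η n then y n else 0) := by
    intro n
    by_cases h1 : ε n <;> by_cases h2 : 0 < inner ℝ v (y n) <;> simp [η, h1, h2] <;> linarith
  funext n
  by_contra hn
  refine (hasSum_lt hle (i := n) (lt_of_le_of_ne (hle n) fun heq => ?_) hε' hη').false
  have := hv n
  cases h1 : ε n <;> cases h2 : η n <;> simp_all

/-- If `∑ x_n` is conditionally convergent in `ℝ^k` with `SR(x) = ℝ^k` and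
`∑ y_n` is absolutely convergent in `ℝ^m` with all terms nonzero, then the achievement set
of the sequence of pairs `(x_n, y_n)` is not closed. -/
theorem stmt_11 (k m : ℕ) (x : ℕ → EuclideanSpace ℝ (Fin k))
    (y : ℕ → EuclideanSpace ℝ (Fin m))
    (hconv : ∃ s, Tendsto (fun N => ∑ n ∈ Finset.range N, x n) atTop (𝓝 s))
    (hnabs : ¬ Summable fun n => ‖x n‖)
    (hsr : sumRange x = Set.univ)
    (hy : Summable fun n => ‖y n‖) (hne : ∀ n, y n ≠ 0) :
    ¬ IsClosed (achv (fun n => (x n, y n))) := by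
  intro hclosed
  obtain ⟨t, ht, η, hη⟩ := exists_unique_subsum hy hne
  have hlim (s : EuclideanSpace ℝ (Fin k)) :
      Tendsto (fun N => ∑ n ∈ Finset.range N, if η n then x n else 0) atTop (𝓝 s) := by
    have hmem := mem_closure_achv_prod hsr hy s ht
    rw [hclosed.closure_eq] at hmem
    obtain ⟨ε, hε⟩ := hmem
    have hsnd := (continuous_snd.tendsto _).comp hε
    have hfst := (continuous_fst.tendsto _).comp hε
    simp only [Function.comp_def, Prod.fst_sum, Prod.snd_sum, apply_ite Prod.fst,
      apply_ite Prod.snd, Prod.fst_zero, Prod.snd_zero] at hfst hsnd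
    rwa [hη ε hsnd] at hfst
  refine hnabs ?_
  have hx : ∀ n, x n = 0 := fun n => tendsto_nhds_unique (hlim (x n)) (hlim 0)
  simp [hx, summable_zero]
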